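/- arXiv:hep-th/0510168 — 2 statements merged into one kernel-verified Lean document; each statement's English description precedes it below -/
import Mathlib

section
/- Let P → X be a principal G-bundle, H a closed subgroup of G, and let P^h and P^{h'} be two principal H-subbundles of P that are isomorphic via an isomorphism Φ: P^h → P^{h'} over X. Then Φ extends to a vertical automorphism of P; consequently, isomorphic reduced H-structures over X are equivalent. -/
/-!
A topological model of principal bundles.  A principal bundle with structure group `G`,
total space `P` and base `X` is encoded by a free continuous right `G`-action whose
orbits are the fibers of the projection; local triviality (with `G`-equivariant
trivializations) is encoded by the existence of continuous local sections together with a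
continuous fiberwise "division" map (which produces the equivariant trivializations).
-/

structure PrincipalBundle (G : Type*) [Group G] [TopologicalSpace G]
    (P : Type*) [TopologicalSpace P] (X : Type*) [TopologicalSpace X] where
  /-- the right action of `G` on `P` -/
  act : P → G → P
  continuous_act : Continuous fun pg : P × G => act pg.1 pg.2
  act_one : ∀ p, act p 1 = p
  act_mul : ∀ p g₁ g₂, act (act p g₁) g₂ = act p (g₁ * g₂)
  free : ∀ p g, act p g = p → g = 1
  /-- the bundle projection -/
  proj : P → X
  continuous_proj : Continuous proj
  surj_proj : Function.Surjective proj
  proj_act : ∀ p g, proj (act p g) = proj p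
  /-- fiberwise division: for `p`, `q` in the same fiber, the unique `g` with `p·g = q` -/
  div : P × P → G
  act_div : ∀ p q, proj p = proj q → act p (div (p, q)) = q
  continuousOn_div : ContinuousOn div {pq : P × P | proj pq.1 = proj pq.2}
  locSection : ∀ x : X, ∃ (U : Set X) (s : X → P), IsOpen U ∧ x ∈ U ∧
    ContinuousOn s U ∧ ∀ y ∈ U, proj (s y) = y

variable {G : Type*} [Group G] [TopologicalSpace G]
  {P : Type*} [TopologicalSpace P] {X : Type*} [TopologicalSpace X]

/-- A principal `H`-subbundle (reduced `H`-structure) of a principal `G`-bundle: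
an `H`-invariant subset whose fibers are single `H`-orbits and which admits continuous
local sections; with the restricted action and projection it is a principal `H`-bundle
over `X`. -/
structure IsSubbundle (PB : PrincipalBundle G P X) (H : Subgroup G) (Q : Set P) : Prop where
  act_mem : ∀ p ∈ Q, ∀ h ∈ H, PB.act p h ∈ Q
  div_mem : ∀ p ∈ Q, ∀ q ∈ Q, PB.proj p = PB.proj q → PB.div (p, q) ∈ H
  locSection : ∀ x : X, ∃ (U : Set X) (s : X → P), IsOpen U ∧ x ∈ U ∧
    ContinuousOn s U ∧ ∀ y ∈ U, s y ∈ Q ∧ PB.proj (s y) = y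

/-- A vertical automorphism of a principal bundle: a `G`-equivariant homeomorphism of the
total space covering the identity of the base. -/
structure VertAut (PB : PrincipalBundle G P X) where
  toHomeomorph : P ≃ₜ P
  equivariant : ∀ p g, toHomeomorph (PB.act p g) = PB.act (toHomeomorph p) g
  vertical : ∀ p, PB.proj (toHomeomorph p) = PB.proj p

/-- Two reduced structures are equivalent if some vertical automorphism of `P` maps one
onto the other. -/
def EquivalentSub (PB : PrincipalBundle G P X) (Q Q' : Set P) : Prop :=
  ∃ Φ : VertAut PB, Φ.toHomeomorph '' Q = Q'

theorem act_cancel_aux (PB : PrincipalBundle G P X) (p : P) (a b : G)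
    (h : PB.act p a = PB.act p b) : a = b := by
  have h1 : PB.act p (a * b⁻¹) = p := by
    rw [← PB.act_mul, h, PB.act_mul, mul_inv_cancel, PB.act_one]
  exact mul_inv_eq_one.mp (PB.free _ _ h1)

/-- A continuous `H`-equivariant map over the base defined on a reduced structure extends to a
continuous `G`-equivariant map over the base. -/
theorem extend_aux (PB : PrincipalBundle G P X) (H : Subgroup G)
    {Q : Set P} (hQ : IsSubbundle PB H Q) (φ : P → P)
    (hproj : ∀ p ∈ Q, PB.proj (φ p) = PB.proj p)
    (hequiv : ∀ p ∈ Q, ∀ g ∈ H, φ (PB.act p g) = PB.act (φ p) g)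
    (hcont : ContinuousOn φ Q) :
    ∃ F : P → P, Continuous F ∧ (∀ p g, F (PB.act p g) = PB.act (F p) g) ∧
      (∀ p, PB.proj (F p) = PB.proj p) ∧ ∀ p ∈ Q, F p = φ p := by
  have hex : ∀ x : X, ∃ q ∈ Q, PB.proj q = x := fun x => by
    obtain ⟨U, s, -, hx, -, hs⟩ := hQ.locSection x
    exact ⟨s x, hs x hx⟩
  choose σ hσQ hσ using hex
  let F : P → P := fun p => PB.act (φ (σ (PB.proj p))) (PB.div (σ (PB.proj p), p))
  have key : ∀ q ∈ Q, ∀ p, PB.proj q = PB.proj p → F p = PB.act (φ q) (PB.div (q, p)) := by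
    intro q hq p hqp
    have e0 : PB.proj (σ (PB.proj p)) = PB.proj p := hσ _
    have e1 : PB.proj (σ (PB.proj p)) = PB.proj q := e0.trans hqp.symm
    have hm := hQ.div_mem _ (hσQ _) q hq e1
    have h1 := hequiv _ (hσQ (PB.proj p)) _ hm
    rw [PB.act_div _ _ e1] at h1
    rw [h1, PB.act_mul]
    change PB.act _ _ = _
    congr 1
    apply act_cancel_aux PB (σ (PB.proj p))
    rw [PB.act_div _ _ e0, ← PB.act_mul, PB.act_div _ _ e1, PB.act_div _ _ hqp]
  refine ⟨F, ?_, ?_, ?_, ?_⟩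
  · rw [continuous_iff_continuousAt]
    intro p
    obtain ⟨U, s, hU, hx, hsc, hs⟩ := hQ.locSection (PB.proj p)
    have hV : IsOpen (PB.proj ⁻¹' U) := hU.preimage PB.continuous_proj
    have c1 : ContinuousOn (fun p => s (PB.proj p)) (PB.proj ⁻¹' U) :=
      hsc.comp PB.continuous_proj.continuousOn (fun _ h => h)
    have c2 : ContinuousOn (fun p => φ (s (PB.proj p))) (PB.proj ⁻¹' U) :=
      hcont.comp c1 (fun y hy => (hs _ hy).1)
    have c3 : ContinuousOn (fun p => PB.div (s (PB.proj p), p)) (PB.proj ⁻¹' U) :=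
      PB.continuousOn_div.comp (c1.prodMk continuousOn_id) (fun y hy => (hs _ hy).2)
    have c4 : ContinuousOn (fun p => PB.act (φ (s (PB.proj p))) (PB.div (s (PB.proj p), p)))
        (PB.proj ⁻¹' U) := PB.continuous_act.comp_continuousOn (c2.prodMk c3)
    have c5 : ContinuousOn F (PB.proj ⁻¹' U) :=
      c4.congr (fun y hy => key _ (hs _ hy).1 y (hs _ hy).2)
    exact c5.continuousAt (hV.mem_nhds hx)
  · intro p g
    have e0 : PB.proj (σ (PB.proj p)) = PB.proj p := hσ _
    have e1 : PB.proj (σ (PB.proj p)) = PB.proj (PB.act p g) := by rw [e0, PB.proj_act]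
    rw [key _ (hσQ (PB.proj p)) _ e1, key _ (hσQ (PB.proj p)) _ e0, PB.act_mul]
    congr 1
    apply act_cancel_aux PB (σ (PB.proj p))
    rw [PB.act_div _ _ e1, ← PB.act_mul, PB.act_div _ _ e0]
  · intro p
    change PB.proj (PB.act _ _) = _
    rw [PB.proj_act, hproj _ (hσQ _), hσ]
  · intro p hp
    rw [key p hp p rfl, PB.free p _ (PB.act_div p p rfl), PB.act_one]

/-- A vertical equivariant map fixing a reduced structure is the identity. -/
theorem eq_id_aux (PB : PrincipalBundle G P X) (H : Subgroup G)
    {Q : Set P} (hQ : IsSubbundle PB H Q) (F : P → P)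
    (hF : ∀ p g, F (PB.act p g) = PB.act (F p) g) (hfix : ∀ p ∈ Q, F p = p) (p : P) :
    F p = p := by
  obtain ⟨U, s, -, hx, -, hs⟩ := hQ.locSection (PB.proj p)
  obtain ⟨h1, h2⟩ := hs _ hx
  rw [← PB.act_div _ _ h2, hF, hfix _ h1]

/-- Let `P^h` and `P^{h'}` be two principal `H`-subbundles of a principal
`G`-bundle `P → X` which are isomorphic over `X` via an `H`-equivariant homeomorphism
`φ : P^h → P^{h'}` (with inverse `ψ`) commuting with the projections to `X`.  Then `φ`
extends to a vertical automorphism of `P`; consequently, the isomorphic reduced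
`H`-structures `P^h` and `P^{h'}` are equivalent. -/
theorem isomorphism_of_reduced_structures_extends_to_vertAut
    (PB : PrincipalBundle G P X) (H : Subgroup G) (hH : IsClosed (H : Set G))
    {Q Q' : Set P} (hQ : IsSubbundle PB H Q) (hQ' : IsSubbundle PB H Q')
    (φ ψ : P → P)
    (hφQ : Set.MapsTo φ Q Q') (hψQ : Set.MapsTo ψ Q' Q)
    (hinv : ∀ p ∈ Q, ψ (φ p) = p) (hinv' : ∀ p ∈ Q', φ (ψ p) = p)
    (hproj : ∀ p ∈ Q, PB.proj (φ p) = PB.proj p)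
    (hequiv : ∀ p ∈ Q, ∀ g ∈ H, φ (PB.act p g) = PB.act (φ p) g)
    (hcont : ContinuousOn φ Q) (hcont' : ContinuousOn ψ Q') :
    (∃ Ψ : VertAut PB, ∀ p ∈ Q, Ψ.toHomeomorph p = φ p) ∧
    EquivalentSub PB Q Q' := by
  have hproj' : ∀ p ∈ Q', PB.proj (ψ p) = PB.proj p := fun p hp => by
    rw [← hproj _ (hψQ hp), hinv' p hp]
  have hequiv' : ∀ p ∈ Q', ∀ g ∈ H, ψ (PB.act p g) = PB.act (ψ p) g := fun p hp g hg => by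
    rw [← hinv _ (hQ.act_mem _ (hψQ hp) g hg), hequiv _ (hψQ hp) g hg, hinv' p hp]
  obtain ⟨F, Fc, Fe, Fv, Fφ⟩ := extend_aux PB H hQ φ hproj hequiv hcont
  obtain ⟨K, Kc, Ke, Kv, Kψ⟩ := extend_aux PB H hQ' ψ hproj' hequiv' hcont'
  have hKF : ∀ p, K (F p) = p := eq_id_aux PB H hQ (fun p => K (F p))
    (fun p g => by simp only [Fe, Ke])
    (fun p hp => by simp only [Fφ p hp, Kψ _ (hφQ hp), hinv p hp])
  have hFK : ∀ p, F (K p) = p := eq_id_aux PB H hQ' (fun p => F (K p))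
    (fun p g => by simp only [Fe, Ke])
    (fun p hp => by simp only [Kψ p hp, Fφ _ (hψQ hp), hinv' p hp])
  let Ψ : VertAut PB :=
    { toHomeomorph :=
        { toFun := F
          invFun := K
          left_inv := hKF
          right_inv := hFK
          continuous_toFun := Fc
          continuous_invFun := Kc }
      equivariant := Fe
      vertical := Fv }
  have hΨ : ∀ p ∈ Q, Ψ.toHomeomorph p = φ p := Fφ
  refine ⟨⟨Ψ, hΨ⟩, Ψ, ?_⟩
  ext p
  constructor
  · rintro ⟨q, hq, rfl⟩
    rw [hΨ q hq]
    exact hφQ hq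
  · intro hp
    exact ⟨ψ p, hψQ hp, by rw [hΨ _ (hψQ hp), hinv' p hp]⟩
end

section
/- Let P → X be a principal G-bundle, H a closed subgroup of G, Σ = P/H, and Y = (P × V)/H the vector bundle over Σ associated to the principal H-bundle P → P/H. For every global section h of Σ → X with corresponding reduced subbundle P^h, there is a one-to-one correspondence between the global sections s_h of the P^h-associated bundle Y^h = (P^h × V)/H → X and the global sections s of the composite fiber bundle Y → Σ → X that project onto h, i.e., satisfy π_{YΣ} ∘ s = h; the correspondence is s = i_h ∘ s_h, where i_h: Y^h → Y is the canonical injection with image π_{YΣ}^{-1}(h(X)). -/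
variable {G : Type*} [Group G] [TopologicalSpace G]
  {P : Type*} [TopologicalSpace P] {X : Type*} [TopologicalSpace X]

/-- The orbit equivalence relation of the right `H`-action on `P`; its quotient is
`Σ = P/H`. -/
def orbitSetoid (PB : PrincipalBundle G P X) (H : Subgroup G) : Setoid P where
  r p q := ∃ h ∈ H, PB.act p h = q
  iseqv := by
    refine ⟨fun p => ⟨1, H.one_mem, PB.act_one p⟩, ?_, ?_⟩
    · rintro p q ⟨h, hh, rfl⟩
      exact ⟨h⁻¹, H.inv_mem hh, by rw [PB.act_mul, mul_inv_cancel, PB.act_one]⟩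
    · rintro p q r ⟨h₁, hh₁, rfl⟩ ⟨h₂, hh₂, rfl⟩
      exact ⟨h₁ * h₂, H.mul_mem hh₁ hh₂, (PB.act_mul p h₁ h₂).symm⟩

/-- The projection `π_{ΣX} : Σ = P/H → X`. -/
def projQuot (PB : PrincipalBundle G P X) (H : Subgroup G) :
    Quotient (orbitSetoid PB H) → X :=
  Quotient.lift PB.proj <| by
    rintro p q ⟨h, hh, rfl⟩
    exact (PB.proj_act p h).symm

section Stmt11

variable (PB : PrincipalBundle G P X) (H : Subgroup G)
variable (V : Type*) [AddCommGroup V] [Module ℝ V] [TopologicalSpace V]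
variable [MulAction H V] [ContinuousSMul H V]

/-- The relation identifying `(p, v)` with `(p·h, h⁻¹•v)`, `h ∈ H`, on `P × V`; its
quotient is the vector bundle `Y = (P × V)/H` over `Σ = P/H` associated to the principal
`H`-bundle `P → P/H`. -/
def assocHSetoid : Setoid (P × V) where
  r a b := ∃ h : H, b.1 = PB.act a.1 h ∧ b.2 = h⁻¹ • a.2
  iseqv := by
    refine ⟨fun a => ⟨1, by rw [Subgroup.coe_one, PB.act_one], by rw [inv_one, one_smul]⟩,
      ?_, ?_⟩
    · rintro a b ⟨h, h1, h2⟩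
      refine ⟨h⁻¹, ?_, ?_⟩
      · rw [h1, PB.act_mul]
        simp [PB.act_one]
      · rw [h2, inv_inv, smul_smul, mul_inv_cancel, one_smul]
    · rintro a b c ⟨h, h1, h2⟩ ⟨h', h1', h2'⟩
      refine ⟨h * h', ?_, ?_⟩
      · rw [h1', h1, PB.act_mul]
        simp
      · rw [h2', h2, smul_smul, mul_inv_rev]

/-- `π_{YΣ} : Y = (P × V)/H → Σ = P/H`. -/
def projYSigma : Quotient (assocHSetoid PB H V) → Quotient (orbitSetoid PB H) :=
  Quotient.lift (fun a => Quotient.mk (orbitSetoid PB H) a.1) <| by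
    rintro a b ⟨h, h1, h2⟩
    exact Quotient.sound ⟨(h : G), h.2, h1.symm⟩

variable (hs : X → Quotient (orbitSetoid PB H))

/-- The reduced subbundle `P^h = π_{PΣ}⁻¹(h(X))` determined by a global section `h` of
`Σ = P/H → X`. -/
def reducedSub : Set P :=
  {p : P | Quotient.mk (orbitSetoid PB H) p = hs (PB.proj p)}

/-- The relation identifying `(p, v)` with `(p·h, h⁻¹•v)`, `h ∈ H`, on `P^h × V`; its
quotient is the associated bundle `Y^h = (P^h × V)/H` over `X`. -/
def assocHSetoidSub : Setoid (reducedSub PB H hs × V) where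
  r a b := ∃ h : H, (b.1 : P) = PB.act a.1 h ∧ b.2 = h⁻¹ • a.2
  iseqv := by
    refine ⟨fun a => ⟨1, by rw [Subgroup.coe_one, PB.act_one], by rw [inv_one, one_smul]⟩,
      ?_, ?_⟩
    · rintro a b ⟨h, h1, h2⟩
      refine ⟨h⁻¹, ?_, ?_⟩
      · rw [h1, PB.act_mul]
        simp [PB.act_one]
      · rw [h2, inv_inv, smul_smul, mul_inv_cancel, one_smul]
    · rintro a b c ⟨h, h1, h2⟩ ⟨h', h1', h2'⟩
      refine ⟨h * h', ?_, ?_⟩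
      · rw [h1', h1, PB.act_mul]
        simp
      · rw [h2', h2, smul_smul, mul_inv_rev]

/-- The projection `Y^h = (P^h × V)/H → X`. -/
def projYh : Quotient (assocHSetoidSub PB H V hs) → X :=
  Quotient.lift (fun a => PB.proj (a.1 : P)) <| by
    rintro a b ⟨h, h1, h2⟩
    show PB.proj (a.1 : P) = PB.proj (b.1 : P)
    rw [h1, PB.proj_act]

/-- The canonical injection `i_h : Y^h ↪ Y` over `X`. -/
def injYh : Quotient (assocHSetoidSub PB H V hs) → Quotient (assocHSetoid PB H V) :=
  Quotient.lift (fun a => Quotient.mk (assocHSetoid PB H V) ((a.1 : P), a.2)) <| by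
    rintro a b ⟨h, h1, h2⟩
    exact Quotient.sound ⟨h, h1, h2⟩


theorem aux_mem (p : P) (h : H) (hp : p ∈ reducedSub PB H hs) :
    PB.act p h ∈ reducedSub PB H hs := by
  have e : Quotient.mk (orbitSetoid PB H) p = Quotient.mk (orbitSetoid PB H) (PB.act p h) :=
    Quotient.sound ⟨(h : G), h.2, rfl⟩
  change Quotient.mk (orbitSetoid PB H) (PB.act p h) = hs (PB.proj (PB.act p h))
  rw [← e, PB.proj_act]
  exact hp

theorem aux_inj : Function.Injective (injYh PB H V hs) := by
  intro a b hab
  induction a using Quotient.inductionOn with | _ a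
  induction b using Quotient.inductionOn with | _ b
  obtain ⟨h, h1, h2⟩ := Quotient.exact hab
  exact Quotient.sound ⟨h, h1, h2⟩

theorem aux_cont : Continuous (injYh PB H V hs) := by
  refine Continuous.quotient_lift ?_ _
  exact continuous_quotient_mk'.comp
    ((continuous_subtype_val.comp continuous_fst).prodMk continuous_snd)

/-- The quotient map `P × V → Y` is open. -/
theorem aux_open (O : Set (P × V)) (hO : IsOpen O) :
    IsOpen (Quotient.mk (assocHSetoid PB H V) '' O) := by
  refine isOpen_coinduced.2 ?_
  have e : Quotient.mk (assocHSetoid PB H V) ⁻¹' (Quotient.mk (assocHSetoid PB H V) '' O) =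
      ⋃ h : H, (fun a : P × V => (PB.act a.1 h, h⁻¹ • a.2)) ⁻¹' O := by
    ext a
    simp only [Set.mem_preimage, Set.mem_image, Set.mem_iUnion]
    constructor
    · rintro ⟨b, hb, hba⟩
      obtain ⟨h, h1, h2⟩ := Quotient.exact hba.symm
      exact ⟨h, by rw [← h1, ← h2]; exact hb⟩
    · rintro ⟨h, hh⟩
      exact ⟨_, hh, (Quotient.sound ⟨h, rfl, rfl⟩ :
        Quotient.mk (assocHSetoid PB H V) a = _).symm⟩
  change IsOpen (Quotient.mk (assocHSetoid PB H V) ⁻¹' _)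
  rw [e]
  refine isOpen_iUnion fun h => hO.preimage ?_
  exact (PB.continuous_act.comp (continuous_fst.prodMk continuous_const)).prodMk
    ((continuous_const_smul (h⁻¹ : H)).comp continuous_snd)

theorem aux_lift (sh : X → Quotient (assocHSetoidSub PB H V hs))
    (hc : Continuous (injYh PB H V hs ∘ sh)) : Continuous sh := by
  refine continuous_def.2 fun U hU => ?_
  have hW : IsOpen (Quotient.mk (assocHSetoidSub PB H V hs) ⁻¹' U) :=
    hU.preimage continuous_quotient_mk'
  have hind : Topology.IsInducing
      (Prod.map Subtype.val id : reducedSub PB H hs × V → P × V) :=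
    Topology.IsInducing.subtypeVal.prodMap Topology.IsInducing.id
  obtain ⟨O, hO, hOW⟩ := hind.isOpen_iff.1 hW
  have key : U = injYh PB H V hs ⁻¹' (Quotient.mk (assocHSetoid PB H V) '' O) := by
    ext a
    induction a using Quotient.inductionOn with | _ a
    constructor
    · intro ha
      have : a ∈ Quotient.mk (assocHSetoidSub PB H V hs) ⁻¹' U := ha
      rw [← hOW] at this
      exact ⟨_, this, rfl⟩
    · rintro ⟨⟨p, v⟩, ho, hoa⟩
      obtain ⟨h, h1, h2⟩ := Quotient.exact hoa.symm
      have hp : p ∈ reducedSub PB H hs := by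
        have := aux_mem PB H hs a.1 h a.1.2
        rw [← h1] at this
        exact this
      have hm : ((⟨p, hp⟩, v) : reducedSub PB H hs × V) ∈
          Quotient.mk (assocHSetoidSub PB H V hs) ⁻¹' U := by
        rw [← hOW]; exact ho
      have e : Quotient.mk (assocHSetoidSub PB H V hs) a =
          Quotient.mk (assocHSetoidSub PB H V hs) (⟨p, hp⟩, v) :=
        Quotient.sound ⟨h, h1, h2⟩
      rw [e]; exact hm
  rw [key, ← Set.preimage_comp]
  exact (aux_open PB H V O hO).preimage hc

theorem aux_proj (a : Quotient (assocHSetoidSub PB H V hs)) :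
    projYSigma PB H V (injYh PB H V hs a) = hs (projYh PB H V hs a) := by
  induction a using Quotient.inductionOn with | _ a
  exact a.1.2

theorem aux_range (hs_sec : ∀ x, projQuot PB H (hs x) = x) :
    Set.range (injYh PB H V hs) = projYSigma PB H V ⁻¹' Set.range hs := by
  ext y
  constructor
  · rintro ⟨a, rfl⟩
    exact ⟨_, (aux_proj PB H V hs a).symm⟩
  · induction y using Quotient.inductionOn with | _ y
    rintro ⟨x, hx⟩
    have h1 : PB.proj y.1 = x := by
      have := hs_sec x
      rw [hx] at this
      exact this
    have hy : y.1 ∈ reducedSub PB H hs := by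
      change Quotient.mk (orbitSetoid PB H) y.1 = hs (PB.proj y.1)
      rw [h1]; exact hx.symm
    exact ⟨Quotient.mk _ (⟨y.1, hy⟩, y.2), rfl⟩

/-- Let `P → X` be a principal `G`-bundle, `H ⊂ G` a closed subgroup,
`Σ = P/H`, and `Y = (P × V)/H` the vector bundle over `Σ` associated to the principal
`H`-bundle `P → P/H`.  For every global section `h` of `Σ → X`, with reduced subbundle
`P^h = π_{PΣ}⁻¹(h(X))` and associated bundle `Y^h = (P^h × V)/H → X`, the canonical
injection `i_h : Y^h ↪ Y` is injective with image `π_{YΣ}⁻¹(h(X))`, and `s_h ↦ i_h ∘ s_h`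
is a one-to-one correspondence between global sections of `Y^h → X` and global sections of
the composite fiber bundle `Y → Σ → X` which project onto `h`. -/
theorem sections_of_reduced_assoc_bijOn_sections_covering_h
    (hH : IsClosed (H : Set G))
    (hs_cont : Continuous hs) (hs_sec : ∀ x, projQuot PB H (hs x) = x) :
    Function.Injective (injYh PB H V hs) ∧
    Set.range (injYh PB H V hs) = projYSigma PB H V ⁻¹' Set.range hs ∧
    Set.BijOn (fun sh : X → Quotient (assocHSetoidSub PB H V hs) => injYh PB H V hs ∘ sh)
      {sh | Continuous sh ∧ ∀ x, projYh PB H V hs (sh x) = x}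
      {s : X → Quotient (assocHSetoid PB H V) |
        Continuous s ∧ (∀ x, projQuot PB H (projYSigma PB H V (s x)) = x) ∧
        ∀ x, projYSigma PB H V (s x) = hs x} := by
  refine ⟨aux_inj PB H V hs, aux_range PB H V hs hs_sec, ?_, ?_, ?_⟩
  · rintro sh ⟨hc, hp⟩
    have h2 : ∀ x, projYSigma PB H V ((injYh PB H V hs ∘ sh) x) = hs x := fun x => by
      rw [Function.comp_apply, aux_proj, hp]
    exact ⟨(aux_cont PB H V hs).comp hc, fun x => by
      change projQuot PB H (projYSigma PB H V ((injYh PB H V hs ∘ sh) x)) = x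
      rw [h2, hs_sec], h2⟩
  · intro a _ b _ hab
    funext x
    exact aux_inj PB H V hs (congrFun hab x)
  · rintro s ⟨hc, _, h2⟩
    have hr : ∀ x, ∃ a, injYh PB H V hs a = s x := fun x => by
      have : s x ∈ projYSigma PB H V ⁻¹' Set.range hs := ⟨x, (h2 x).symm⟩
      rw [← aux_range PB H V hs hs_sec] at this
      exact this
    choose sh hsh using hr
    have e : injYh PB H V hs ∘ sh = s := funext hsh
    refine ⟨sh, ⟨aux_lift PB H V hs sh (by rw [e]; exact hc), fun x => ?_⟩, e⟩
    have h3 := aux_proj PB H V hs (sh x)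
    rw [hsh, h2] at h3
    have h4 := congrArg (projQuot PB H) h3
    rw [hs_sec, hs_sec] at h4
    exact h4.symm

end Stmt11
end
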